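/- Over the binary alphabet Σ = {0,1}, there exists an integer-valued Hamming compatible metric δ on Σ* that is not weakly uniform and takes values smaller than d_2: specifically, the function δ defined by δ(u,ε) = 0 if u = ε, δ(000,ε) = 1, δ(u,ε) = d_2(u,000) for all other u, and δ(u,v) = d_2(u,v) for u, v ≠ ε, is a Hamming compatible metric satisfying δ(0,ε) = 1 ≠ 2 = δ(1,ε) (so δ is not weakly uniform) and δ(000,ε) = 1 < 2 = d_2(000,ε). -/

import Mathlib

/-- The truncated Hamming function `H(ū,v̄)`: the Hamming distance between the
first `min (l u) (l v)` letters of `u` and of `v` (computed via `zip`, which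
truncates to the common length).  For words of equal length it is the usual
Hamming distance. -/
def hamming {α : Type*} [DecidableEq α] (u v : List α) : ℕ :=
  (u.zip v).countP (fun p => decide (p.1 ≠ p.2))

/-- The metric `d₂(u,v) = H(ū,v̄) + ⌈|l(u) − l(v)|/2⌉`
(note `⌈m/2⌉ = (m + 1)/2` in natural-number division). -/
def d2 {α : Type*} [DecidableEq α] (u v : List α) : ℕ :=
  hamming u v + (Nat.dist u.length v.length + 1) / 2

/-- The word `000` over the binary alphabet (with `0 = false`, `1 = true`). -/
def w000 : List Bool := [false, false, false]

/-- The metric of Example 4.11: `δ(ε,ε) = 0`, `δ(000,ε) = 1`,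
`δ(u,ε) = d₂(u,000)` for all other `u`, and `δ(u,v) = d₂(u,v)` for
`u, v ≠ ε` (extended symmetrically). -/
def delta17 (u v : List Bool) : ℕ :=
  if u = [] ∧ v = [] then 0
  else if v = [] then (if u = w000 then 1 else d2 u w000)
  else if u = [] then (if v = w000 then 1 else d2 v w000)
  else d2 u v

theorem ham_nil_left (v : List Bool) : hamming [] v = 0 := by simp [hamming]
theorem ham_nil_right (v : List Bool) : hamming v [] = 0 := by simp [hamming]
theorem ham_cons (a b : Bool) (u v : List Bool) :
    hamming (a :: u) (b :: v) = hamming u v + (if a = b then 0 else 1) := by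
  by_cases h : a = b <;> simp [hamming, List.countP_cons, h]

theorem ham_comm (u v : List Bool) : hamming u v = hamming v u := by
  induction u generalizing v with
  | nil => simp [ham_nil_left, ham_nil_right]
  | cons a u ih =>
    cases v with
    | nil => simp [ham_nil_left, ham_nil_right]
    | cons b v => rw [ham_cons, ham_cons, ih v]; simp [eq_comm]

theorem ham_le (u v : List Bool) : hamming u v ≤ u.length ∧ hamming u v ≤ v.length := by
  have h := List.countP_le_length (p := fun p : Bool × Bool => decide (p.1 ≠ p.2)) (l := u.zip v)
  rw [List.length_zip] at h
  exact ⟨h.trans (min_le_left _ _), h.trans (min_le_right _ _)⟩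

theorem ham_zero (u v : List Bool) (hl : u.length = v.length) (h : hamming u v = 0) : u = v := by
  induction u generalizing v with
  | nil => simpa [eq_comm] using hl
  | cons a u ih =>
    cases v with
    | nil => simp at hl
    | cons b v =>
      rw [ham_cons] at h
      have h1 := ih v (by simpa using hl) (by omega)
      have h2 : a = b := by by_contra hab; simp [hab] at h
      rw [h1, h2]

theorem ham_self (u : List Bool) : hamming u u = 0 := by
  induction u with
  | nil => simp [ham_nil_left]
  | cons a u ih => simp [ham_cons, ih]

theorem d2_self (u : List Bool) : d2 u u = 0 := by simp [d2, ham_self]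

theorem d2_zero (u v : List Bool) : d2 u v = 0 ↔ u = v := by
  constructor
  · intro h
    unfold d2 Nat.dist at h
    exact ham_zero u v (by omega) (by omega)
  · rintro rfl; exact d2_self u

theorem d2_comm (u v : List Bool) : d2 u v = d2 v u := by
  unfold d2; rw [ham_comm, Nat.dist_comm]

theorem d2_cons (a b : Bool) (u v : List Bool) :
    d2 (a :: u) (b :: v) = d2 u v + (if a = b then 0 else 1) := by
  simp only [d2, ham_cons, Nat.dist, List.length_cons]; omega

theorem d2_tri (u v w : List Bool) : d2 u v ≤ d2 u w + d2 w v := by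
  induction w generalizing u v with
  | nil =>
    have := ham_le u v
    simp only [d2, ham_nil_left, ham_nil_right, Nat.dist, List.length_nil]; omega
  | cons c w ih =>
    cases u with
    | nil => simp only [d2, ham_nil_left, Nat.dist, List.length_nil]; omega
    | cons a u =>
      cases v with
      | nil => simp only [d2, ham_nil_right, Nat.dist, List.length_nil]; omega
      | cons b v =>
        have := ih u v
        simp only [d2_cons]
        have : (if a = b then 0 else 1) ≤ (if a = c then 0 else 1) + (if c = b then 0 else 1) := by
          cases a <;> cases b <;> cases c <;> decide
        omega

theorem stmt_17 :
    -- delta17 is a metric on Σ*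
    (∀ u v : List Bool, delta17 u v = 0 ↔ u = v) ∧
    (∀ u v : List Bool, delta17 u v = delta17 v u) ∧
    (∀ u v w : List Bool, delta17 u v ≤ delta17 u w + delta17 w v) ∧
    -- delta17 is Hamming compatible
    (∀ u v : List Bool, u.length = v.length → delta17 u v = hamming u v) ∧
    -- delta17 is not weakly uniform: the Hamming opposites 0 and 1 are not
    -- equidistant from ε
    delta17 [false] [] = 1 ∧ delta17 [true] [] = 2 ∧
    -- delta17 takes values smaller than d₂
    delta17 w000 [] = 1 ∧ d2 w000 ([] : List Bool) = 2 := by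
  have hc : ∀ u v : List Bool, delta17 u v = delta17 v u := by
    intro u v
    by_cases hu : u = [] <;> by_cases hv : v = [] <;> simp [delta17, hu, hv, d2_comm u v]
  have hz : ∀ u v : List Bool, delta17 u v = 0 ↔ u = v := by
    intro u v
    by_cases hu : u = [] <;> by_cases hv : v = []
    · simp [delta17, hu, hv]
    · have := d2_zero v w000
      by_cases h : v = w000 <;> grind [delta17]
    · have := d2_zero u w000
      by_cases h : u = w000 <;> grind [delta17]
    · simp [delta17, hu, hv, d2_zero]
  refine ⟨hz, hc, ?_, ?_, by decide, by decide, by decide, by decide⟩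
  · intro u v w
    have t1 := d2_tri u v w
    have t2 := d2_tri u v w000
    have t3 := d2_tri u w000 w
    have t4 := d2_tri w000 v w
    have c1 := d2_comm u w000
    have c2 := d2_comm v w000
    have c3 := d2_comm w w000
    have z1 := d2_zero u w000
    have z2 := d2_zero v w000
    have z3 := d2_zero w w000
    have s1 := d2_self w000
    by_cases hu : u = [] <;> by_cases hv : v = [] <;> by_cases hw : w = [] <;>
      simp only [delta17, hu, hv, hw, true_and, and_true, and_self, if_true, if_false,
        false_and, and_false] <;>
      by_cases ku : u = w000 <;> by_cases kv : v = w000 <;> by_cases kw : w = w000 <;>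
      grind
  · intro u v h
    by_cases hu : u = []
    · subst hu
      have : v = [] := by simpa [eq_comm] using h
      subst this; decide
    · have hv : v ≠ [] := by
        rintro rfl; exact hu (by simpa using h)
      simp [delta17, hu, hv, d2, h]
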